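/- Let c > 1 be a real constant and k ≥ 1 an integer. For any finite simple graph G of order n with minimum degree δ ≥ c·k − 1, the k-tuple domination number satisfies the strict inequality γ_{×k}(G) < (c/(δ+1) + e^{−0.5·k·(c + 1/c − 2)}) · k·n. -/

import Mathlib

open Finset Real

/-- The k-tuple domination number: the minimum cardinality of a set X such that every
vertex has at least k members of X in its closed neighbourhood. -/
noncomputable def kTupleDomNum {V : Type*} [Fintype V] [DecidableEq V]
    (G : SimpleGraph V) [DecidableRel G.Adj] (k : ℕ) : ℕ :=
  sInf {m : ℕ | ∃ X : Finset V,
    (∀ v, k ≤ ((insert v (G.neighborFinset v)) ∩ X).card) ∧ m = X.card}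

/-!
Put each vertex into a random set `X` independently with probability `p = c k / (δ + 1)`, and repair
`X` by adding, for every vertex `v`, the `k - |N[v] ∩ X|` missing elements of `N[v]`. The missing
number is at most `k c ^ (k - |N[v] ∩ X|)`, a Chernoff-type majorant whose expectation is at most
`k c ^ k (1 - p (1 - c⁻¹)) ^ (δ + 1) ≤ k exp (k (log c - (c - 1)))`. The inequality
`log c < (c - c⁻¹) / 2`, which is `x < sinh x` at `x = log c`, yields the stated exponent.
-/

section BernoulliWeight

variable {α R : Type*} [Fintype α] [DecidableEq α]

/-- The probability that a random subset of `α`, containing each element independently with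
probability `p`, is equal to `X`. Expectations are the finite sums `∑ X, bernoulliWeight p X * f X`;
`p` may be any element of a commutative ring. -/
def bernoulliWeight [CommRing R] (p : R) (X : Finset α) : R :=
  p ^ #X * (1 - p) ^ #Xᶜ

section CommRing

variable [CommRing R]

lemma sum_bernoulliWeight_mul_prod (p : R) (f : α → R) :
    ∑ X, bernoulliWeight p X * ∏ i ∈ X, f i = ∏ i, (p * f i + (1 - p)) := by
  simp only [Fintype.prod_add, prod_mul_distrib, prod_const, bernoulliWeight, mul_right_comm]

lemma sum_bernoulliWeight (p : R) : ∑ X : Finset α, bernoulliWeight p X = 1 := by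
  simpa using sum_bernoulliWeight_mul_prod (α := α) p 1

lemma sum_bernoulliWeight_mul_pow_card_inter (p t : R) (S : Finset α) :
    ∑ X, bernoulliWeight p X * t ^ #(S ∩ X) = (p * t + (1 - p)) ^ #S := by
  calc ∑ X, bernoulliWeight p X * t ^ #(S ∩ X)
    _ = ∑ X, bernoulliWeight p X * ∏ i ∈ X, if i ∈ S then t else 1 := by
      simp only [prod_ite_mem, prod_const, inter_comm S]
    _ = ∏ i, if i ∈ S then p * t + (1 - p) else 1 := by
      simp only [sum_bernoulliWeight_mul_prod, mul_ite, ite_add, mul_one, add_sub_cancel]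
    _ = (p * t + (1 - p)) ^ #S := by
      simp only [prod_ite_mem, univ_inter, prod_const]

lemma sum_bernoulliWeight_mul_ite_mem (p : R) (i : α) :
    ∑ X, bernoulliWeight p X * (if i ∈ X then 1 else 0) = p := by
  have h_indicator (X : Finset α) : (if i ∈ X then 1 else 0) = 1 - (0 : R) ^ #({i} ∩ X) := by
    by_cases hi : i ∈ X <;> simp [hi]
  simp only [h_indicator, mul_sub, mul_one, sum_sub_distrib, sum_bernoulliWeight,
    sum_bernoulliWeight_mul_pow_card_inter, card_singleton]
  ring

lemma sum_bernoulliWeight_mul_card (p : R) :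
    ∑ X : Finset α, bernoulliWeight p X * (#X : R) = Fintype.card α * p := by
  calc ∑ X : Finset α, bernoulliWeight p X * (#X : R)
    _ = ∑ i : α, ∑ X, bernoulliWeight p X * (if i ∈ X then 1 else 0) := by
      rw [sum_comm]
      simp only [← mul_sum, sum_boole, filter_univ_mem]
    _ = Fintype.card α * p := by
      simp only [sum_bernoulliWeight_mul_ite_mem, sum_const, card_univ, nsmul_eq_mul]

end CommRing

section Ordered

variable [CommRing R] [LinearOrder R] [IsStrictOrderedRing R] {p : R}

lemma bernoulliWeight_nonneg (hp₀ : 0 ≤ p) (hp₁ : p ≤ 1) (X : Finset α) :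
    0 ≤ bernoulliWeight p X :=
  mul_nonneg (pow_nonneg hp₀ _) (pow_nonneg (sub_nonneg.2 hp₁) _)

lemma exists_le_sum_bernoulliWeight_mul (hp₀ : 0 ≤ p) (hp₁ : p ≤ 1) (f : Finset α → R) :
    ∃ X, f X ≤ ∑ Y, bernoulliWeight p Y * f Y := by
  obtain ⟨X, hX⟩ := Finite.exists_min f
  refine ⟨X, ?_⟩
  calc f X = ∑ Y, bernoulliWeight p Y * f X := by
        rw [← sum_mul, sum_bernoulliWeight, one_mul]
    _ ≤ ∑ Y, bernoulliWeight p Y * f Y :=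
        sum_le_sum fun Y _ ↦ mul_le_mul_of_nonneg_left (hX Y) (bernoulliWeight_nonneg hp₀ hp₁ Y)

end Ordered

end BernoulliWeight

section SetFamily

variable {ι α : Type*} [Fintype ι] [DecidableEq α]

lemma exists_le_card_inter_and_card_le_add_sum_tsub {N : ι → Finset α} {k : ℕ}
    (hN : ∀ i, k ≤ #(N i)) (X : Finset α) :
    ∃ Y, (∀ i, k ≤ #(N i ∩ Y)) ∧ #Y ≤ #X + ∑ i, (k - #(N i ∩ X)) := by
  have h_repair (i : ι) : ∃ A ⊆ N i \ X, #A = k - #(N i ∩ X) :=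
    exists_subset_card_eq <| by have := card_sdiff_add_card_inter (N i) X; grind
  choose A hA_sub hA_card using h_repair
  refine ⟨X ∪ univ.biUnion A, fun i ↦ ?_, ?_⟩
  · have h_disj : Disjoint (N i ∩ X) (A i) :=
      (disjoint_sdiff_inter (N i) X).symm.mono_right (hA_sub i)
    have h_sub : N i ∩ X ∪ A i ⊆ N i ∩ (X ∪ univ.biUnion A) := by
      rw [inter_union_distrib_left]
      exact union_subset_union_right <|
        subset_inter ((hA_sub i).trans sdiff_subset) (subset_biUnion_of_mem A (mem_univ i))
    calc k ≤ #(N i ∩ X) + #(A i) := by rw [hA_card]; exact le_add_tsub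
      _ = #(N i ∩ X ∪ A i) := (card_union_of_disjoint h_disj).symm
      _ ≤ #(N i ∩ (X ∪ univ.biUnion A)) := card_le_card h_sub
  · calc #(X ∪ univ.biUnion A) ≤ #X + ∑ i, #(A i) :=
          (card_union_le _ _).trans (Nat.add_le_add_left card_biUnion_le _)
      _ = #X + ∑ i, (k - #(N i ∩ X)) := by simp only [hA_card]

lemma natCast_tsub_le_mul_pow_mul_inv_pow {K : Type*} [Field K] [LinearOrder K]
    [IsStrictOrderedRing K] {c : K} (hc : 1 ≤ c) (k m : ℕ) :
    ((k - m : ℕ) : K) ≤ k * (c ^ k * c⁻¹ ^ m) := by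
  have hc₀ : 0 < c := zero_lt_one.trans_le hc
  obtain hkm | hmk := le_total k m
  · rw [Nat.sub_eq_zero_of_le hkm, Nat.cast_zero]
    positivity
  · calc ((k - m : ℕ) : K) ≤ k := Nat.cast_le.2 (Nat.sub_le k m)
      _ ≤ k * c ^ (k - m) := le_mul_of_one_le_right k.cast_nonneg (one_le_pow₀ hc)
      _ = k * (c ^ k * c⁻¹ ^ m) := by rw [pow_sub₀ c hc₀.ne' hmk, inv_pow]

theorem exists_le_card_inter_and_card_le [Fintype α] {K : Type*} [Field K] [LinearOrder K]
    [IsStrictOrderedRing K] {N : ι → Finset α} {k d : ℕ} (hkd : k ≤ d) (hN : ∀ i, d ≤ #(N i))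
    {p c : K} (hp₀ : 0 ≤ p) (hp₁ : p ≤ 1) (hc : 1 ≤ c) :
    ∃ Y, (∀ i, k ≤ #(N i ∩ Y)) ∧
      (#Y : K) ≤ Fintype.card α * p +
        Fintype.card ι * (k * (c ^ k * (p * c⁻¹ + (1 - p)) ^ d)) := by
  have hc₀ : 0 < c := zero_lt_one.trans_le hc
  have hq₀ : 0 ≤ p * c⁻¹ + (1 - p) :=
    add_nonneg (mul_nonneg hp₀ (inv_nonneg.2 hc₀.le)) (sub_nonneg.2 hp₁)
  have hq₁ : p * c⁻¹ + (1 - p) ≤ 1 := by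
    linarith [mul_le_of_le_one_right hp₀ (inv_le_one_of_one_le₀ hc)]
  obtain ⟨X, hX⟩ := exists_le_sum_bernoulliWeight_mul hp₀ hp₁
    fun X : Finset α ↦ (#X : K) + ∑ i, k * (c ^ k * c⁻¹ ^ #(N i ∩ X))
  obtain ⟨Y, hY, hY_card⟩ :=
    exists_le_card_inter_and_card_le_add_sum_tsub (fun i ↦ hkd.trans (hN i)) X
  refine ⟨Y, hY, ?_⟩
  calc (#Y : K)
    _ ≤ #X + ∑ i, ((k - #(N i ∩ X) : ℕ) : K) := mod_cast hY_card
    _ ≤ #X + ∑ i, k * (c ^ k * c⁻¹ ^ #(N i ∩ X)) := by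
      gcongr
      exact natCast_tsub_le_mul_pow_mul_inv_pow hc _ _
    _ ≤ ∑ X, bernoulliWeight p X * (#X + ∑ i, k * (c ^ k * c⁻¹ ^ #(N i ∩ X))) := hX
    _ = Fintype.card α * p + ∑ i, k * (c ^ k * (p * c⁻¹ + (1 - p)) ^ #(N i)) := by
      simp only [mul_add, sum_add_distrib, sum_bernoulliWeight_mul_card, mul_sum,
        ← sum_bernoulliWeight_mul_pow_card_inter, mul_left_comm (bernoulliWeight p _)]
      rw [sum_comm]
    _ ≤ Fintype.card α * p + ∑ _i : ι, k * (c ^ k * (p * c⁻¹ + (1 - p)) ^ d) := by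
      gcongr _ + ∑ i, _ * (_ * ?_) with i
      exact pow_le_pow_of_le_one hq₀ hq₁ (hN i)
    _ = Fintype.card α * p + Fintype.card ι * (k * (c ^ k * (p * c⁻¹ + (1 - p)) ^ d)) := by
      rw [sum_const, card_univ, nsmul_eq_mul]

end SetFamily

section Graph

variable {V : Type*} [Fintype V] {G : SimpleGraph V} [DecidableRel G.Adj]

lemma nonempty_of_minDegree_pos (hG : 0 < G.minDegree) : Nonempty V := by
  by_contra! h_empty
  exact hG.ne' G.minDegree_of_subsingleton

variable [DecidableEq V]

lemma card_insert_neighborFinset (v : V) :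
    #(insert v (G.neighborFinset v)) = G.degree v + 1 := by
  rw [card_insert_of_notMem (G.notMem_neighborFinset_self v), G.card_neighborFinset_eq_degree]

lemma kTupleDomNum_le_card {k : ℕ} {X : Finset V}
    (hX : ∀ v, k ≤ #(insert v (G.neighborFinset v) ∩ X)) : kTupleDomNum G k ≤ #X :=
  Nat.sInf_le ⟨X, hX, rfl⟩

theorem kTupleDomNum_le_card_mul {K : Type*} [Field K] [LinearOrder K] [IsStrictOrderedRing K]
    {k : ℕ} (hk : k ≤ G.minDegree + 1) {p c : K} (hp₀ : 0 ≤ p) (hp₁ : p ≤ 1) (hc : 1 ≤ c) :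
    (kTupleDomNum G k : K) ≤
      Fintype.card V * (p + k * (c ^ k * (p * c⁻¹ + (1 - p)) ^ (G.minDegree + 1))) := by
  have h_degree (v : V) : G.minDegree + 1 ≤ #(insert v (G.neighborFinset v)) := by
    rw [card_insert_neighborFinset]
    exact Nat.add_le_add_right (G.minDegree_le_degree v) 1
  obtain ⟨X, hX, hX_card⟩ := exists_le_card_inter_and_card_le hk h_degree hp₀ hp₁ hc
  rw [mul_add]
  exact (Nat.cast_le.2 (kTupleDomNum_le_card hX)).trans hX_card

end Graph

lemma log_lt_half_sub_inv {c : ℝ} (hc : 1 < c) : log c < (c - c⁻¹) / 2 := by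
  rw [← sinh_log (zero_lt_one.trans hc), self_lt_sinh_iff]
  exact log_pos hc

lemma mul_add_one_sub_pow_le_exp {p t : ℝ} (h : 0 ≤ p * t + (1 - p)) (d : ℕ) :
    (p * t + (1 - p)) ^ d ≤ exp (-(p * d * (1 - t))) := by
  have h_exp : p * t + (1 - p) ≤ exp (-(p * (1 - t))) := by
    linarith [one_sub_le_exp_neg (p * (1 - t))]
  calc (p * t + (1 - p)) ^ d ≤ exp (-(p * (1 - t))) ^ d := pow_le_pow_left₀ h h_exp d
    _ = exp (-(p * d * (1 - t))) := by rw [← exp_nat_mul]; ring_nf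

lemma pow_mul_exp_neg_lt_exp {c : ℝ} (hc : 1 < c) {k : ℕ} (hk : k ≠ 0) :
    c ^ k * exp (-(k * (c - 1))) < exp (-(0.5 * k * (c + 1 / c - 2))) := by
  have h_log : k * log c < k * ((c - c⁻¹) / 2) :=
    mul_lt_mul_of_pos_left (log_lt_half_sub_inv hc) (Nat.cast_pos.2 (Nat.pos_of_ne_zero hk))
  calc c ^ k * exp (-(k * (c - 1))) = exp (k * log c - k * (c - 1)) := by
        rw [sub_eq_add_neg _ (_ * _), exp_add, exp_nat_mul, exp_log (zero_lt_one.trans hc)]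
    _ < exp (-(0.5 * k * (c + 1 / c - 2))) := by
        rw [exp_lt_exp, one_div]
        linarith

lemma pow_mul_pow_lt_exp {c p : ℝ} {k d : ℕ} (hc : 1 < c) (hk : k ≠ 0) (hp₀ : 0 ≤ p) (hp₁ : p ≤ 1)
    (hpd : c * k ≤ p * d) :
    c ^ k * (p * c⁻¹ + (1 - p)) ^ d < exp (-(0.5 * k * (c + 1 / c - 2))) := by
  have hc₀ : 0 < c := zero_lt_one.trans hc
  have hq₀ : 0 ≤ p * c⁻¹ + (1 - p) :=
    add_nonneg (mul_nonneg hp₀ (inv_nonneg.2 hc₀.le)) (sub_nonneg.2 hp₁)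
  have h_exponent : k * (c - 1) ≤ p * d * (1 - c⁻¹) := by
    calc k * (c - 1) = c * k * (1 - c⁻¹) := by field_simp
      _ ≤ p * d * (1 - c⁻¹) :=
          mul_le_mul_of_nonneg_right hpd (sub_nonneg.2 (inv_le_one_of_one_le₀ hc.le))
  calc c ^ k * (p * c⁻¹ + (1 - p)) ^ d
    _ ≤ c ^ k * exp (-(p * d * (1 - c⁻¹))) := by
        gcongr
        exact mul_add_one_sub_pow_le_exp hq₀ d
    _ ≤ c ^ k * exp (-(k * (c - 1))) := by gcongr
    _ < exp (-(0.5 * k * (c + 1 / c - 2))) := pow_mul_exp_neg_lt_exp hc hk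

theorem k_tuple_domination_threshold_bound
    {V : Type*} [Fintype V] [DecidableEq V]
    (G : SimpleGraph V) [DecidableRel G.Adj]
    (n : ℕ) (hn : n = Fintype.card V)
    (δ : ℕ) (hδ : δ = G.minDegree)
    (c : ℝ) (hc : 1 < c)
    (k : ℕ) (hk : 1 ≤ k)
    (hcδ : c * k - 1 ≤ (δ : ℝ)) :
    (kTupleDomNum G k : ℝ) <
      (c / ((δ : ℝ) + 1) + Real.exp (-(0.5 * k * (c + 1 / c - 2)))) * ((k : ℝ) * n) := by
  subst hn hδ
  set δ := G.minDegree
  have hk₀ : (0 : ℝ) < k := Nat.cast_pos.2 hk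
  have hk_lt : (k : ℝ) < δ + 1 := by linarith [lt_mul_of_one_lt_left hk₀ hc]
  have hkδ : k < δ + 1 := mod_cast hk_lt
  have : Nonempty V := nonempty_of_minDegree_pos (G := G) (by omega)
  set p : ℝ := c * k / (δ + 1) with hp
  have hp₀ : 0 ≤ p := by positivity
  have hp₁ : p ≤ 1 := div_le_one_of_le₀ (by linarith) (by positivity)
  have hpδ : p * (δ + 1 : ℕ) = c * k := by rw [hp]; push_cast; field_simp
  calc (kTupleDomNum G k : ℝ)
    _ ≤ Fintype.card V * (p + k * (c ^ k * (p * c⁻¹ + (1 - p)) ^ (δ + 1))) :=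
      kTupleDomNum_le_card_mul hkδ.le hp₀ hp₁ hc.le
    _ < Fintype.card V * (p + k * exp (-(0.5 * k * (c + 1 / c - 2)))) := by
      gcongr
      exact pow_mul_pow_lt_exp hc (by omega) hp₀ hp₁ hpδ.ge
    _ = (c / (δ + 1) + exp (-(0.5 * k * (c + 1 / c - 2)))) * (k * Fintype.card V) := by
      rw [hp]
      ring
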